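/- Let λ=(λ_1,…,λ_r) and μ=(μ_1,…,μ_r) be partitions (zero parts allowed) with μ⊆λ, and let γ=(γ_{ij})∈T^diag(λ/μ,ℕ) with common diagonal values c_k. Then, as an identity of formal power series in ℤ[[t_1,t_2,…]], the Schur type quasi-symmetric function satisfies S_{λ/μ}(γ) = det[ E_{(c_{μ_j−j+1}, c_{μ_j−j+2}, …, c_{μ_j−j+(λ_i−μ_j−i+j)})} ]_{1≤i,j≤r}, where the (i,j) entry is understood to be 1 if λ_i−μ_j−i+j=0 and 0 if λ_i−μ_j−i+j<0. -/

import Mathlib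

/-!
The identity is proved by the Lindström–Gessel–Viennot argument, one coefficient at a time.

A sequence counted by an entry of the determinant is regarded as a lattice path `ℤ → ℕ∞` (`IsPath`)
from content `μ_j - j` to content `λ_i - i`, so the determinant expands into a signed count of
families of paths indexed by permutations (`gf_prod`, `EqsymSeq_eq_gf`). Since the exponent attached
to a step depends only on its content, exchanging the tails of two paths at a common content
preserves the weight. Applied to the first place `(x, i)` where the adjacent paths `i`, `i + 1` fail
to be column strict, this is a sign-reversing involution (`sum_families`). It pairs off all families
with such a failure. In the remaining families the permutation is the identity
(`perm_eq_one_of_no_cross`) and the paths are the rows of a semi-standard tableau (`tabEquiv`).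

The argument needs finitely many paths of every weight, hence positive exponents. These are
only given on diagonals that contain a box; on other diagonals `c` may vanish and some entries of
the matrix may then have meaningless coefficients. Such entries occur only in terms of the
determinant that have another factor `0` (`exists_box`), so `c` can be changed to a positive
function without changing the determinant (`det_congr`).
-/

open scoped BigOperators

noncomputable section

namespace SMZ

/-- Box `(i,j)` (0-indexed) lies in the Young diagram of the partition `lam`. -/
def InDiag (lam : ℕ → ℕ) (p : ℕ × ℕ) : Prop := p.2 < lam p.1

/-- `(i,j)` is a corner of the Young diagram of `lam`. -/
def IsCorner (lam : ℕ → ℕ) (p : ℕ × ℕ) : Prop :=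
  InDiag lam p ∧ ¬ InDiag lam (p.1 + 1, p.2) ∧ ¬ InDiag lam (p.1, p.2 + 1)

/-- `lam` is the part function of a partition with exactly `r` positive parts. -/
def IsPartitionWith (r : ℕ) (lam : ℕ → ℕ) : Prop :=
  Antitone lam ∧ ∀ i, 0 < lam i ↔ i < r

/-- Semi-standard Young tableau of shape `lam`, normalized to be `0` off the diagram. -/
structure IsSSYT (lam : ℕ → ℕ) (m : ℕ × ℕ → ℕ) : Prop where
  zero_off : ∀ p, ¬ InDiag lam p → m p = 0
  pos : ∀ p, InDiag lam p → 0 < m p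
  row_le : ∀ i j, InDiag lam (i, j + 1) → m (i, j) ≤ m (i, j + 1)
  col_lt : ∀ i j, InDiag lam (i + 1, j) → m (i, j) < m (i + 1, j)

/-- The summand `1 / M^s` of the Schur multiple zeta series. -/
def term (r : ℕ) (lam : ℕ → ℕ) (s : ℕ × ℕ → ℂ) (m : ℕ × ℕ → ℕ) : ℂ :=
  ∏ i ∈ Finset.range r, ∏ j ∈ Finset.range (lam i), (m (i, j) : ℂ) ^ (-(s (i, j)))

/-- The Schur multiple zeta function `ζ_λ(s)`. -/
def schurZeta (r : ℕ) (lam : ℕ → ℕ) (s : ℕ × ℕ → ℂ) : ℂ :=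
  ∑' M : {m : ℕ × ℕ → ℕ // IsSSYT lam m}, term r lam s M.1

/-- The region `W_λ` of (sufficient) absolute convergence. -/
def MemW (lam : ℕ → ℕ) (s : ℕ × ℕ → ℂ) : Prop :=
  (∀ p, InDiag lam p → 1 ≤ (s p).re) ∧ ∀ p, IsCorner lam p → 1 < (s p).re

/-- Euler–Zagier multiple zeta function. -/
def mzv {n : ℕ} (s : Fin n → ℂ) : ℂ :=
  ∑' f : {f : Fin n → ℕ // StrictMono f ∧ ∀ i, 0 < f i},
    ∏ i, (f.1 i : ℂ) ^ (-(s i))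

/-- Euler–Zagier multiple zeta-star function. -/
def mzvStar {n : ℕ} (s : Fin n → ℂ) : ℂ :=
  ∑' f : {f : Fin n → ℕ // Monotone f ∧ ∀ i, 0 < f i},
    ∏ i, (f.1 i : ℂ) ^ (-(s i))

/-- `ζ⋆(a start, a (start+1), …)` with `len` terms; `1` if `len = 0`, `0` if `len < 0`. -/
def mzvStarSeq (a : ℤ → ℂ) (start len : ℤ) : ℂ :=
  if len < 0 then 0 else mzvStar fun i : Fin len.toNat => a (start + (i : ℕ))

/-- `ζ(a start, a (start-1), …)` with `len` terms; `1` if `len = 0`, `0` if `len < 0`. -/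
def mzvSeqDesc (a : ℤ → ℂ) (start len : ℤ) : ℂ :=
  if len < 0 then 0 else mzv fun i : Fin len.toNat => a (start - (i : ℕ))

/-- The conjugate partition: `conjPart r lam c` is the number of rows `i < r` with a box
in column `c`, i.e. the (0-indexed) `c`-th part of `λ'`. -/
def conjPart (r : ℕ) (lam : ℕ → ℕ) (c : ℕ) : ℕ :=
  ((Finset.range r).filter fun i => c < lam i).card

end SMZ
namespace SMZ

/-- Box `(i,j)` (0-indexed) lies in the skew Young diagram `λ/μ`. -/
def InSkew (lam mu : ℕ → ℕ) (p : ℕ × ℕ) : Prop := mu p.1 ≤ p.2 ∧ p.2 < lam p.1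

/-- `(i,j)` is a corner of the skew diagram `λ/μ`. -/
def IsSkewCorner (lam mu : ℕ → ℕ) (p : ℕ × ℕ) : Prop :=
  InSkew lam mu p ∧ ¬ InSkew lam mu (p.1 + 1, p.2) ∧ ¬ InSkew lam mu (p.1, p.2 + 1)

/-- `(lam, mu)` is a skew pair with at most `r` rows (zero parts allowed). -/
def IsSkewPairWith (r : ℕ) (lam mu : ℕ → ℕ) : Prop :=
  Antitone lam ∧ Antitone mu ∧ (∀ i, mu i ≤ lam i) ∧ ∀ i, r ≤ i → lam i = 0

/-- Semi-standard Young tableau of skew shape `λ/μ`, normalized to be `0` off the diagram. -/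
structure IsSkewSSYT (lam mu : ℕ → ℕ) (m : ℕ × ℕ → ℕ) : Prop where
  zero_off : ∀ p, ¬ InSkew lam mu p → m p = 0
  pos : ∀ p, InSkew lam mu p → 0 < m p
  row_le : ∀ i j, InSkew lam mu (i, j) → InSkew lam mu (i, j + 1) → m (i, j) ≤ m (i, j + 1)
  col_lt : ∀ i j, InSkew lam mu (i, j) → InSkew lam mu (i + 1, j) → m (i, j) < m (i + 1, j)

/-- The summand `1 / M^s` of the skew Schur multiple zeta series. -/
def skewTerm (r : ℕ) (lam mu : ℕ → ℕ) (s : ℕ × ℕ → ℂ) (m : ℕ × ℕ → ℕ) : ℂ :=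
  ∏ i ∈ Finset.range r, ∏ j ∈ Finset.Ico (mu i) (lam i), (m (i, j) : ℂ) ^ (-(s (i, j)))

/-- The skew Schur multiple zeta function `ζ_{λ/μ}(s)`. -/
def skewSchurZeta (r : ℕ) (lam mu : ℕ → ℕ) (s : ℕ × ℕ → ℂ) : ℂ :=
  ∑' M : {m : ℕ × ℕ → ℕ // IsSkewSSYT lam mu m}, skewTerm r lam mu s M.1

/-- The region `W_{λ/μ}` of (sufficient) absolute convergence. -/
def MemWSkew (lam mu : ℕ → ℕ) (s : ℕ × ℕ → ℂ) : Prop :=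
  (∀ p, InSkew lam mu p → 1 ≤ (s p).re) ∧ ∀ p, IsSkewCorner lam mu p → 1 < (s p).re

end SMZ
namespace SMZ

/-- The essential quasi-symmetric function `E_γ` as a multivariate power series in the
variables `t_1, t_2, …` (indexed by `ℕ`, variable `0` unused): the coefficient of a
monomial `d` is the number of ways to write it as `t_{m_1}^{γ_1} ⋯ t_{m_n}^{γ_n}` with
`0 < m_1 ≤ … ≤ m_n`. -/
def Eqsym {n : ℕ} (γ : Fin n → ℕ) : MvPowerSeries ℕ ℤ := fun d =>
  (Nat.card {f : Fin n → ℕ // Monotone f ∧ (∀ i, 0 < f i) ∧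
    (∑ i, Finsupp.single (f i) (γ i)) = d} : ℤ)

/-- The monomial quasi-symmetric function `M_γ` as a multivariate power series. -/
def Mqsym {n : ℕ} (γ : Fin n → ℕ) : MvPowerSeries ℕ ℤ := fun d =>
  (Nat.card {f : Fin n → ℕ // StrictMono f ∧ (∀ i, 0 < f i) ∧
    (∑ i, Finsupp.single (f i) (γ i)) = d} : ℤ)

/-- `E_{(c start, c (start+1), …)}` with `len` terms; `1` if `len = 0`, `0` if `len < 0`. -/
def EqsymSeq (c : ℤ → ℕ) (start len : ℤ) : MvPowerSeries ℕ ℤ :=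
  if len < 0 then 0 else Eqsym fun i : Fin len.toNat => c (start + (i : ℕ))

/-- `M_{(c start, c (start-1), …)}` with `len` terms; `1` if `len = 0`, `0` if `len < 0`. -/
def MqsymSeqDesc (c : ℤ → ℕ) (start len : ℤ) : MvPowerSeries ℕ ℤ :=
  if len < 0 then 0 else Mqsym fun i : Fin len.toNat => c (start - (i : ℕ))

/-- The Schur type quasi-symmetric function `S_{λ/μ}(γ)` as a multivariate power series:
the coefficient of a monomial `d` is the number of semi-standard Young tableaux `m` of
shape `λ/μ` with `∏_{(i,j)} t_{m_{ij}}^{γ_{ij}}` equal to the monomial `d`. -/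
def schurQS (r : ℕ) (lam mu : ℕ → ℕ) (γ : ℕ × ℕ → ℕ) : MvPowerSeries ℕ ℤ := fun d =>
  (Nat.card {m : ℕ × ℕ → ℕ // IsSkewSSYT lam mu m ∧
    (∑ i ∈ Finset.range r, ∑ j ∈ Finset.Ico (mu i) (lam i),
      Finsupp.single (m (i, j)) (γ (i, j))) = d} : ℤ)

end SMZ

/-! ### Generating functions with finite fibres -/

namespace SMZ

/-- The generating function `∑ a, t ^ w a`. It is meaningful only when the fibres of `w` are finite:
an infinite fibre contributes the junk coefficient `0`. -/
def gf {A : Type*} (w : A → (ℕ →₀ ℕ)) : MvPowerSeries ℕ ℤ := fun d =>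
  (Nat.card {a : A // w a = d} : ℤ)

lemma coeff_gf {A : Type*} (w : A → (ℕ →₀ ℕ)) (d : ℕ →₀ ℕ) :
    MvPowerSeries.coeff d (gf w) = (Nat.card {a : A // w a = d} : ℤ) := rfl

/-- A family of total weight `d` is a decomposition of `d` into weights `l i`, together with one
element of weight `l i` for every `i`. -/
def piFiberEquiv {ι : Type*} [Fintype ι] [DecidableEq ι] {A : ι → Type*}
    (w : ∀ i, A i → (ℕ →₀ ℕ)) (d : ℕ →₀ ℕ) :
    {a : ∀ i, A i // ∑ i, w i (a i) = d} ≃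
      Σ l : {l // l ∈ Finset.finsuppAntidiag (Finset.univ : Finset ι) d},
        ∀ i, {a : A i // w i a = l.1 i} where
  toFun := fun a => ⟨⟨Finsupp.equivFunOnFinite.symm (fun i => w i (a.1 i)), by
      rw [Finset.mem_finsuppAntidiag]
      exact ⟨by simpa using a.2, by simp⟩⟩, fun i => ⟨a.1 i, rfl⟩⟩
  invFun := fun x => ⟨fun i => (x.2 i).1, by
      have := (Finset.mem_finsuppAntidiag.1 x.1.2).1
      exact (Finset.sum_congr rfl fun i _ => (x.2 i).2).trans this⟩
  left_inv := fun a => rfl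
  right_inv := by
    rintro ⟨⟨l, hl⟩, x⟩
    obtain ⟨y, hy, rfl⟩ : ∃ y : ∀ i, A i, ∃ h : ∀ i, w i (y i) = l i,
        x = fun i => ⟨y i, h i⟩ := ⟨fun i => (x i).1, fun i => (x i).2, rfl⟩
    have : l = Finsupp.equivFunOnFinite.symm (fun i => w i (y i)) := by
      ext1 i; exact (hy i).symm
    subst this
    rfl

lemma finite_pi_fiber {ι : Type*} [Fintype ι] {A : ι → Type*}
    (w : ∀ i, A i → (ℕ →₀ ℕ)) (hfin : ∀ i d, Finite {a : A i // w i a = d}) (d : ℕ →₀ ℕ) :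
    Finite {a : ∀ i, A i // ∑ i, w i (a i) = d} := by
  classical
  exact Finite.of_equiv _ (piFiberEquiv w d).symm

lemma gf_prod {ι : Type*} [Fintype ι] [DecidableEq ι] {A : ι → Type*}
    (w : ∀ i, A i → (ℕ →₀ ℕ)) (hfin : ∀ i d, Finite {a : A i // w i a = d}) :
    ∏ i, gf (w i) = gf (fun a : ∀ i, A i => ∑ i, w i (a i)) := by
  ext d
  rw [MvPowerSeries.coeff_prod, coeff_gf]
  simp only [coeff_gf]
  rw [Nat.card_congr (piFiberEquiv w d), Nat.card_sigma]
  simp only [Nat.card_pi]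
  push_cast
  rw [← Finset.sum_coe_sort]

/-! ### Monotone sequences as paths -/

/-- A lattice path from content `a` to content `b`, i.e. a weakly increasing sequence of positive
integers `f a ≤ f (a + 1) ≤ … ≤ f (b - 1)`, extended to all of `ℤ` by `0` before `a` and by `⊤`
from `b` on. In this form the end points can be read off the function, and no path with `b < a`
exists. -/
structure IsPath (a b : ℤ) (f : ℤ → ℕ∞) : Prop where
  mono : Monotone f
  zero_iff : ∀ y, f y = 0 ↔ y < a
  top_iff : ∀ y, f y = ⊤ ↔ b ≤ y

/-- The exponent of the monomial `t_v ^ (c y)`; it is `0` outside the range of a path, where the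
height `v` is `0` or `⊤` (both have `toNat` equal to `0`). -/
def stepWt (c : ℤ → ℕ) (y : ℤ) (v : ℕ∞) : ℕ →₀ ℕ :=
  if v.toNat = 0 then 0 else Finsupp.single v.toNat (c y)

/-- The exponent of the monomial of a path, computed over a fixed window `[L, U)` of contents
that is to contain the range of the path. A window common to all paths makes the weight of a
family a sum over contents, which is visibly unchanged by exchanging tails. -/
def pathWt (c : ℤ → ℕ) (L U : ℤ) (f : ℤ → ℕ∞) : ℕ →₀ ℕ :=
  ∑ y ∈ Finset.Ico L U, stepWt c y (f y)

lemma IsPath.le {a b : ℤ} {f : ℤ → ℕ∞} (h : IsPath a b f) : a ≤ b := by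
  by_contra hab
  have h1 := (h.zero_iff b).2 (by omega)
  have h2 := (h.top_iff b).2 le_rfl
  simp [h1] at h2

lemma IsPath.toNat_pos {a b : ℤ} {f : ℤ → ℕ∞} (h : IsPath a b f) {y : ℤ}
    (h1 : a ≤ y) (h2 : y < b) : 0 < (f y).toNat := by
  have h0 : f y ≠ 0 := fun h' => by have := (h.zero_iff y).1 h'; omega
  have ht : f y ≠ ⊤ := fun h' => by have := (h.top_iff y).1 h'; omega
  rw [Nat.pos_iff_ne_zero, Ne, ENat.toNat_eq_zero]
  tauto

lemma IsPath.coe_toNat {a b : ℤ} {f : ℤ → ℕ∞} (h : IsPath a b f) {y : ℤ}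
    (h2 : y < b) : ((f y).toNat : ℕ∞) = f y :=
  ENat.natCast_toNat fun h' => by have := (h.top_iff y).1 h'; omega

/-- The path from `a` to `b` with height `g y` at every content `y` in `[a, b)`. -/
def mkPath (a b : ℤ) (g : ℤ → ℕ) (y : ℤ) : ℕ∞ :=
  if y < a then 0 else if y < b then (g y : ℕ∞) else ⊤

lemma isPath_mkPath {a b : ℤ} (hab : a ≤ b) {g : ℤ → ℕ}
    (hpos : ∀ y, a ≤ y → y < b → 0 < g y)
    (hg : ∀ y z, a ≤ y → y ≤ z → z < b → g y ≤ g z) : IsPath a b (mkPath a b g) := by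
  refine ⟨fun y z hyz => ?_, fun y => ?_, fun y => ?_⟩
  · unfold mkPath
    split_ifs <;> first | omega | simp
    exact hg _ _ (by omega) hyz (by omega)
  · unfold mkPath
    split_ifs with h1 h2
    · simpa
    · simpa [h1] using (hpos y (by omega) h2).ne'
    · simpa using h1
  · unfold mkPath
    split_ifs with h1 h2
    · simp; omega
    · simpa using h2
    · simpa using h2

lemma IsPath.mkPath_eq {a b : ℤ} {f : ℤ → ℕ∞} (h : IsPath a b f) {g : ℤ → ℕ}
    (hg : ∀ y, a ≤ y → y < b → g y = (f y).toNat) : mkPath a b g = f := by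
  funext y
  unfold mkPath
  split_ifs with h1 h2
  · exact ((h.zero_iff y).2 h1).symm
  · rw [hg y (by omega) h2, h.coe_toNat h2]
  · exact ((h.top_iff y).2 (by omega)).symm

lemma IsPath.pathWt_eq {a b L U : ℤ} {f : ℤ → ℕ∞} (h : IsPath a b f) (hL : L ≤ a) (hU : b ≤ U)
    (c : ℤ → ℕ) : pathWt c L U f = ∑ y ∈ Finset.Ico a b, Finsupp.single (f y).toNat (c y) := by
  unfold pathWt
  symm
  rw [← Finset.sum_subset (Finset.Ico_subset_Ico hL hU)]
  · refine Finset.sum_congr rfl fun y hy => ?_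
    rw [Finset.mem_Ico] at hy
    rw [stepWt, if_neg (h.toNat_pos hy.1 hy.2).ne']
  · intro y _ hy
    rw [Finset.mem_Ico] at hy
    rw [stepWt, if_pos]
    rw [ENat.toNat_eq_zero, h.zero_iff, h.top_iff]
    omega

lemma sum_Ico_int_eq {M : Type*} [AddCommMonoid M] (a b : ℤ) (F : ℤ → M) :
    ∑ y ∈ Finset.Ico a b, F y = ∑ i : Fin (b - a).toNat, F (a + (i : ℕ)) := by
  refine (Finset.sum_bij (fun (i : Fin (b - a).toNat) _ => a + (i : ℕ)) ?_ ?_ ?_ ?_).symm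
  · intro i _
    rw [Finset.mem_Ico]
    omega
  · intro i _ j _ h
    ext
    omega
  · intro y hy
    rw [Finset.mem_Ico] at hy
    exact ⟨⟨(y - a).toNat, by omega⟩, Finset.mem_univ _, by simp only; omega⟩
  · intros
    rfl

/-- The sequences counted by `Eqsym` are the paths from `a` to `b`. -/
def pathEquiv {a b L U : ℤ} (hab : a ≤ b) (hL : L ≤ a) (hU : b ≤ U) (c : ℤ → ℕ) (d : ℕ →₀ ℕ) :
    {g : Fin (b - a).toNat → ℕ // Monotone g ∧ (∀ i, 0 < g i) ∧
      (∑ i, Finsupp.single (g i) (c (a + (i : ℕ)))) = d} ≃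
    {f : {f // IsPath a b f} // pathWt c L U f.1 = d} where
  toFun g :=
    have hp : IsPath a b (mkPath a b fun y =>
        if h : (y - a).toNat < (b - a).toNat then g.1 ⟨(y - a).toNat, h⟩ else 0) := by
      refine isPath_mkPath hab (fun y h1 h2 => ?_) (fun y z h1 h2 h3 => ?_)
      · rw [dif_pos (by omega)]
        exact g.2.2.1 _
      · rw [dif_pos (by omega), dif_pos (by omega)]
        exact g.2.1 (by simp [Fin.le_def]; omega)
    ⟨⟨_, hp⟩, by
      rw [hp.pathWt_eq hL hU, sum_Ico_int_eq]
      refine Eq.trans ?_ g.2.2.2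
      refine Finset.sum_congr rfl fun i _ => ?_
      have := i.2
      simp only [mkPath]
      rw [if_neg (by omega), if_pos (by omega), dif_pos (by omega)]
      simp⟩
  invFun f := ⟨fun i => (f.1.1 (a + (i : ℕ))).toNat, by
    refine ⟨fun i j hij => ?_, fun i => ?_, ?_⟩
    · have := j.2
      rw [← ENat.natCast_le_natCast, f.1.2.coe_toNat (by omega), f.1.2.coe_toNat (by omega)]
      exact f.1.2.mono (by have := Fin.le_def.1 hij; omega)
    · exact f.1.2.toNat_pos (by omega) (by omega)
    · refine Eq.trans ?_ f.2
      rw [f.1.2.pathWt_eq hL hU, sum_Ico_int_eq]⟩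
  left_inv g := by
    ext i
    have := i.2
    simp only [mkPath]
    rw [if_neg (by omega), if_pos (by omega), dif_pos (by omega)]
    simp
  right_inv f := by
    ext1; ext1
    refine f.1.2.mkPath_eq fun y h1 h2 => ?_
    rw [dif_pos (by omega)]
    have hy : a + ((y - a).toNat : ℤ) = y := by omega
    simp only [hy]

lemma EqsymSeq_eq_gf {a b L U : ℤ} (hL : L ≤ a) (hU : b ≤ U) (c : ℤ → ℕ) :
    EqsymSeq c a (b - a) = gf (fun f : {f // IsPath a b f} => pathWt c L U f.1) := by
  ext d
  rw [coeff_gf]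
  by_cases hab : a ≤ b
  · rw [EqsymSeq, if_neg (by omega), ← Nat.card_congr (pathEquiv hab hL hU c d)]
    rfl
  · rw [EqsymSeq, if_pos (by omega)]
    have : IsEmpty {f : {f // IsPath a b f} // pathWt c L U f.1 = d} :=
      ⟨fun f => hab f.1.2.le⟩
    simp

/-- Positivity of `c` forces all heights of a path of weight `d` into the support of `d`. -/
lemma finite_path {a b L U : ℤ} (hL : L ≤ a) (hU : b ≤ U) {c : ℤ → ℕ} (hc : ∀ k, 0 < c k)
    (d : ℕ →₀ ℕ) : Finite {f : {f // IsPath a b f} // pathWt c L U f.1 = d} := by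
  by_cases hab : a ≤ b
  · have : Finite {g : Fin (b - a).toNat → ℕ // Monotone g ∧ (∀ i, 0 < g i) ∧
        (∑ i, Finsupp.single (g i) (c (a + (i : ℕ)))) = d} := by
      refine Finite.of_injective (β := Fin (b - a).toNat → d.support)
        (fun g i => ⟨g.1 i, ?_⟩) (fun g g' h => ?_)
      · have h1 := DFunLike.congr_fun g.2.2.2 (g.1 i)
        rw [Finsupp.mem_support_iff, ← h1, Finsupp.finsetSum_apply]
        refine (lt_of_lt_of_le (hc (a + (i : ℕ))) ?_).ne'
        refine le_trans ?_ (Finset.single_le_sum (f := fun j => (Finsupp.single (g.1 j)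
          (c (a + (j : ℕ)))) (g.1 i)) (fun _ _ => Nat.zero_le _) (Finset.mem_univ i))
        simp
      · ext i
        exact congrArg Subtype.val (congrFun h i)
    exact Finite.of_equiv _ (pathEquiv hab hL hU c d)
  · have : IsEmpty {f : {f // IsPath a b f} // pathWt c L U f.1 = d} :=
      ⟨fun f => hab f.1.2.le⟩
    infer_instance

end SMZ

/-! ### The sign-reversing involution -/

namespace SMZ

variable {r : ℕ}

/-- A family of `r` paths, the `j`-th one leading from `a j` to `b (σ j)`. -/
def IsFam (a b : Fin r → ℤ) (σ : Equiv.Perm (Fin r)) (f : Fin r → ℤ → ℕ∞) : Prop :=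
  ∀ j, IsPath (a j) (b (σ j)) (f j)

/-- The total weight of a family of paths. -/
def famWt (c : ℤ → ℕ) (L U : ℤ) (f : Fin r → ℤ → ℕ∞) : ℕ →₀ ℕ :=
  ∑ j, pathWt c L U (f j)

/-- The adjacent paths `i` and `k = i + 1` violate column strictness at content `x`: the height of
path `i` at `x` is not below the height of path `k` at `x - 1`. The conditions `start_le` and
`ne_top` exclude contents before the start of path `i` or past the end of path `k`; both depend only
on data that an exchange of the tails at `x` leaves alone. -/
structure Crosses (a : Fin r → ℤ) (f : Fin r → ℤ → ℕ∞) (x : ℤ) (i k : Fin r) : Prop where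
  succ : (k : ℕ) = i + 1
  start_le : a i ≤ x
  ne_top : f k (x - 1) ≠ ⊤
  le : f k (x - 1) ≤ f i x

/-- The lexicographically first violation `(x, i)`. -/
structure FirstCross (a : Fin r → ℤ) (f : Fin r → ℤ → ℕ∞) (x : ℤ) (i k : Fin r) : Prop where
  crosses : Crosses a f x i k
  first : ∀ x' i' k', Crosses a f x' i' k' → x < x' ∨ x = x' ∧ i ≤ i'

lemma FirstCross.unique {a : Fin r → ℤ} {f : Fin r → ℤ → ℕ∞} {x x' : ℤ} {i k i' k' : Fin r}
    (h : FirstCross a f x i k) (h' : FirstCross a f x' i' k') : x = x' ∧ i = i' ∧ k = k' := by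
  have h1 := h.first _ _ _ h'.crosses
  have h2 := h'.first _ _ _ h.crosses
  have h3 := h.crosses.succ
  have h4 := h'.crosses.succ
  simp only [Fin.le_def, Fin.ext_iff] at *
  omega

lemma exists_firstCross {a : Fin r → ℤ} {f : Fin r → ℤ → ℕ∞} {L : ℤ} (hL : ∀ i, L ≤ a i)
    (h : ∃ x i k, Crosses a f x i k) : ∃ x i k, FirstCross a f x i k := by
  obtain ⟨x, ⟨i, k, hx⟩, hmin⟩ := Int.exists_least_of_bdd
    (P := fun x => ∃ i k, Crosses a f x i k)
    ⟨L, fun x ⟨i, k, hx⟩ => (hL i).trans hx.start_le⟩ h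
  obtain ⟨i', ⟨k', hi'⟩, hmin'⟩ := WellFounded.has_min (wellFounded_lt (α := Fin r))
    {i | ∃ k, Crosses a f x i k} ⟨i, k, hx⟩
  refine ⟨x, i', k', hi', fun x₂ i₂ k₂ h₂ => ?_⟩
  rcases (hmin x₂ ⟨i₂, k₂, h₂⟩).lt_or_eq with h3 | rfl
  · exact Or.inl h3
  · exact Or.inr ⟨rfl, not_lt.1 (hmin' i₂ ⟨k₂, h₂⟩)⟩

/-- Exchange of the parts of the paths `i` and `k` at contents `≥ x`. -/
def swapTails (f : Fin r → ℤ → ℕ∞) (x : ℤ) (i k : Fin r) : Fin r → ℤ → ℕ∞ :=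
  fun j y => if y < x then f j y else f (Equiv.swap i k j) y

lemma swapTails_swapTails (f : Fin r → ℤ → ℕ∞) (x : ℤ) (i k : Fin r) :
    swapTails (swapTails f x i k) x i k = f := by
  funext j y
  unfold swapTails
  split_ifs <;> simp

lemma famWt_swapTails (c : ℤ → ℕ) (L U : ℤ) (f : Fin r → ℤ → ℕ∞) (x : ℤ) (i k : Fin r) :
    famWt c L U (swapTails f x i k) = famWt c L U f := by
  unfold famWt pathWt
  rw [Finset.sum_comm, Finset.sum_comm (s := Finset.univ)]
  refine Finset.sum_congr rfl fun y _ => ?_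
  unfold swapTails
  split_ifs
  · rfl
  · exact Equiv.sum_comp (Equiv.swap i k) (fun j => stepWt c y (f j y))

/-- Exchanging tails at the first violation leaves it the first violation: whether a violation
precedes `(x, i)` depends only on values at contents `< x` and on values at `x` of paths
before the `i`-th. -/
lemma FirstCross.swapTails {a b : Fin r → ℤ} {σ : Equiv.Perm (Fin r)} {f : Fin r → ℤ → ℕ∞}
    {x : ℤ} {i k : Fin r} (hf : IsFam a b σ f) (h : FirstCross a f x i k) :
    FirstCross a (swapTails f x i k) x i k := by
  have hik := h.crosses.succ
  refine ⟨⟨hik, h.crosses.start_le, ?_, ?_⟩, fun x' i' k' h' => ?_⟩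
  · simpa [SMZ.swapTails] using h.crosses.ne_top
  · simpa [SMZ.swapTails] using (hf k).mono (by omega)
  · by_contra hcon
    have hlt : x' < x ∨ x' = x ∧ i' < i := by
      simp only [Fin.le_def, Fin.lt_def] at *
      omega
    have h2 := h'.ne_top
    have h3 := h'.le
    have hi' : SMZ.swapTails f x i k i' x' = f i' x' := by
      unfold SMZ.swapTails
      split_ifs with h4
      · rfl
      · rw [Equiv.swap_apply_of_ne_of_ne] <;>
        · simp only [Fin.lt_def, Ne, Fin.ext_iff] at *
          omega
    have hk' : SMZ.swapTails f x i k k' (x' - 1) = f k' (x' - 1) := if_pos (by omega)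
    rw [hk'] at h2 h3
    rw [hi'] at h3
    exact hcon (h.first x' i' k' ⟨h'.succ, h'.start_le, h2, h3⟩)

/-- Exchanging tails at the first violation gives again a family of paths. The new path `k` is
monotone by the violation itself, the new path `i` because there is no violation at `x - 1`. -/
lemma FirstCross.isFam {a b : Fin r → ℤ} (ha : StrictAnti a) {σ : Equiv.Perm (Fin r)}
    {f : Fin r → ℤ → ℕ∞} {x : ℤ} {i k : Fin r} (hf : IsFam a b σ f) (h : FirstCross a f x i k) :
    IsFam a b (σ * Equiv.swap i k) (SMZ.swapTails f x i k) := by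
  have hik := h.crosses.succ
  have hne : i ≠ k := by rintro rfl; omega
  have hak : a k < a i := ha (by rw [Fin.lt_def]; omega)
  have hax := h.crosses.start_le
  have hle := h.crosses.le
  have hkb : x - 1 < b (σ k) := not_le.1 fun h' => h.crosses.ne_top (((hf k).top_iff _).2 h')
  have hlt : f i (x - 1) ≤ f k (x - 1) := by
    by_cases hx : x - 1 < a i
    · simp [((hf i).zero_iff _).2 hx]
    · have hk2 : f k (x - 1 - 1) ≤ f k (x - 1) := (hf k).mono (by omega)
      refine (not_le.1 fun h' => ?_).le.trans hk2
      have := h.first (x - 1) i k ⟨hik, by omega, fun h'' => ?_, h'⟩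
      · omega
      · have := ((hf k).top_iff _).1 h''
        omega
  have hib : x - 1 < b (σ i) := not_le.1 fun h' => h.crosses.ne_top
    (top_le_iff.1 ((((hf i).top_iff _).2 h') ▸ hlt))
  intro j
  by_cases hj : j = i
  · subst hj
    simp only [Equiv.Perm.mul_apply, Equiv.swap_apply_left]
    refine ⟨fun y z hyz => ?_, fun y => ?_, fun y => ?_⟩ <;>
      simp only [SMZ.swapTails, Equiv.swap_apply_left]
    · split_ifs with h1 h2 h2
      · exact (hf j).mono hyz
      · exact ((hf j).mono (by omega)).trans (hlt.trans ((hf k).mono (by omega)))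
      · omega
      · exact (hf k).mono hyz
    · split_ifs with h1
      · exact (hf j).zero_iff y
      · rw [(hf k).zero_iff]; omega
    · split_ifs with h1
      · rw [(hf j).top_iff]; omega
      · exact (hf k).top_iff y
  by_cases hj' : j = k
  · subst hj'
    simp only [Equiv.Perm.mul_apply, Equiv.swap_apply_right]
    refine ⟨fun y z hyz => ?_, fun y => ?_, fun y => ?_⟩ <;>
      simp only [SMZ.swapTails, Equiv.swap_apply_right]
    · split_ifs with h1 h2 h2
      · exact (hf j).mono hyz
      · exact ((hf j).mono (by omega)).trans (hle.trans ((hf i).mono (by omega)))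
      · omega
      · exact (hf i).mono hyz
    · split_ifs with h1
      · exact (hf j).zero_iff y
      · rw [(hf i).zero_iff]; omega
    · split_ifs with h1
      · rw [(hf j).top_iff]; omega
      · exact (hf i).top_iff y
  · have : SMZ.swapTails f x i k j = f j := by
      funext y
      simp [SMZ.swapTails, Equiv.swap_apply_of_ne_of_ne hj hj']
    rw [this]
    simpa [Equiv.swap_apply_of_ne_of_ne hj hj'] using hf j

/-- Without violations the end points of the paths occur in decreasing order, as the paths
would otherwise cross at the end of the lower one. -/
lemma perm_eq_one_of_no_cross {a b : Fin r → ℤ} (hb : StrictAnti b)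
    {σ : Equiv.Perm (Fin r)} {f : Fin r → ℤ → ℕ∞} (hf : IsFam a b σ f)
    (h : ∀ x i k, ¬ Crosses a f x i k) : σ = 1 := by
  have hstep : ∀ i k : Fin r, (k : ℕ) = i + 1 → σ i < σ k := by
    intro i k hik
    rw [← hb.lt_iff_gt]
    have hi := (hf i).le
    by_contra hcon
    refine h (b (σ k)) i k ⟨hik, by omega, fun h' => ?_, ?_⟩
    · have := ((hf k).top_iff _).1 h'
      omega
    · rw [((hf i).top_iff _).2 (by omega)]
      exact le_top
  have hmono : StrictMono σ := by
    intro i k hik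
    obtain ⟨n, hn⟩ : ∃ n, (k : ℕ) = i + 1 + n := ⟨k - i - 1, by rw [Fin.lt_def] at hik; omega⟩
    clear hik
    induction n generalizing k with
    | zero => exact hstep i k hn
    | succ n ih =>
      have hk := k.2
      exact (ih (k := ⟨i + 1 + n, by omega⟩) rfl).trans (hstep _ _ hn)
  ext1 i
  have h1 : (hmono.orderIsoOfSurjective σ σ.surjective) = OrderIso.refl _ := Subsingleton.elim _ _
  exact DFunLike.congr_fun h1 i

/-- In the signed count of path families, those with a violation cancel in pairs, and the
remaining ones all belong to the identity permutation. -/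
lemma sum_families {a b : Fin r → ℤ} (ha : StrictAnti a) (hb : StrictAnti b) {L U : ℤ}
    (hL : ∀ i, L ≤ a i) (c : ℤ → ℕ) (d : ℕ →₀ ℕ)
    (hfin : ∀ σ, Finite {f // IsFam a b σ f ∧ famWt c L U f = d}) :
    ∑ σ : Equiv.Perm (Fin r), (Equiv.Perm.sign σ : ℤ) *
        (Nat.card {f // IsFam a b σ f ∧ famWt c L U f = d} : ℤ) =
      (Nat.card {f // (IsFam a b 1 f ∧ ∀ x i k, ¬ Crosses a f x i k) ∧ famWt c L U f = d} : ℤ) := by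
  classical
  have hF : ∀ σ, {f | IsFam a b σ f ∧ famWt c L U f = d}.Finite := fun σ => hfin σ
  let T : Equiv.Perm (Fin r) → Finset (Fin r → ℤ → ℕ∞) := fun σ => (hF σ).toFinset
  have hT : ∀ σ f, f ∈ T σ ↔ IsFam a b σ f ∧ famWt c L U f = d := fun σ f =>
    (hF σ).mem_toFinset
  have hcard : ∀ σ, Nat.card {f // IsFam a b σ f ∧ famWt c L U f = d} = (T σ).card :=
    fun σ => Nat.card_eq_card_finite_toFinset (hF σ)
  have hsum : ∑ σ : Equiv.Perm (Fin r), (Equiv.Perm.sign σ : ℤ) * ((T σ).card : ℤ) =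
      ∑ p ∈ Finset.univ.sigma T, (Equiv.Perm.sign p.1 : ℤ) := by
    rw [Finset.sum_sigma]
    simp [mul_comm]
  simp only [hcard]
  rw [hsum, ← Finset.sum_filter_add_sum_filter_not _
    (fun p : (Σ _ : Equiv.Perm (Fin r), Fin r → ℤ → ℕ∞) => ∃ x i k, Crosses a p.2 x i k)]
  have hzero : ∑ p ∈ (Finset.univ.sigma T).filter (fun p => ∃ x i k, Crosses a p.2 x i k),
      (Equiv.Perm.sign p.1 : ℤ) = 0 := by
    have hex : ∀ p ∈ (Finset.univ.sigma T).filter (fun p => ∃ x i k, Crosses a p.2 x i k),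
        ∃ t : ℤ × Fin r × Fin r, FirstCross a p.2 t.1 t.2.1 t.2.2 := by
      intro p hp
      obtain ⟨x, i, k, h⟩ := exists_firstCross hL (Finset.mem_filter.1 hp).2
      exact ⟨(x, i, k), h⟩
    choose t ht using hex
    have hmem : ∀ p (hp : p ∈ (Finset.univ.sigma T).filter
        (fun p => ∃ x i k, Crosses a p.2 x i k)),
        (⟨p.1 * Equiv.swap (t p hp).2.1 (t p hp).2.2,
          swapTails p.2 (t p hp).1 (t p hp).2.1 (t p hp).2.2⟩ :
          (Σ _ : Equiv.Perm (Fin r), Fin r → ℤ → ℕ∞)) ∈ (Finset.univ.sigma T).filter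
        (fun p => ∃ x i k, Crosses a p.2 x i k) := by
      intro p hp
      have hp' := (hT _ _).1 (Finset.mem_sigma.1 (Finset.mem_filter.1 hp).1).2
      refine Finset.mem_filter.2 ⟨Finset.mem_sigma.2 ⟨Finset.mem_univ _, (hT _ _).2 ⟨?_, ?_⟩⟩, ?_⟩
      · exact (ht p hp).isFam ha hp'.1
      · rw [famWt_swapTails, hp'.2]
      · exact ⟨_, _, _, ((ht p hp).swapTails hp'.1).crosses⟩
    have hneq : ∀ p hp, (t p hp).2.1 ≠ (t p hp).2.2 := by
      intro p hp h
      have := (ht p hp).crosses.succ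
      rw [← h] at this
      omega
    refine Finset.sum_involution (fun p hp => ⟨p.1 * Equiv.swap (t p hp).2.1 (t p hp).2.2,
      swapTails p.2 (t p hp).1 (t p hp).2.1 (t p hp).2.2⟩) ?_ ?_ hmem ?_
    · intro p hp
      simp [Equiv.Perm.sign_swap (hneq p hp)]
    · intro p hp _ h
      have h1 := congrArg Sigma.fst h
      simp only [mul_eq_left] at h1
      exact hneq p hp (Equiv.swap_eq_one_iff.1 h1)
    · intro p hp
      have hp' := (hT _ _).1 (Finset.mem_sigma.1 (Finset.mem_filter.1 hp).1).2
      obtain ⟨h1, h2, h3⟩ := (ht _ (hmem p hp)).unique ((ht p hp).swapTails hp'.1)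
      simp only [h1, h2, h3, swapTails_swapTails, mul_assoc, Equiv.swap_mul_self, mul_one]
  rw [hzero, zero_add]
  have hone : ∀ p ∈ (Finset.univ.sigma T).filter (fun p => ¬ ∃ x i k, Crosses a p.2 x i k),
      p.1 = 1 := by
    intro p hp
    obtain ⟨h1, h2⟩ := Finset.mem_filter.1 hp
    push Not at h2
    exact perm_eq_one_of_no_cross hb ((hT _ _).1 (Finset.mem_sigma.1 h1).2).1 h2
  rw [Finset.sum_congr rfl (g := fun _ => (1 : ℤ)) fun p hp => by rw [hone p hp]; simp]
  rw [Finset.sum_const, nsmul_eq_mul, mul_one, Nat.cast_inj]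
  rw [← Nat.card_eq_finsetCard]
  refine Nat.card_congr
    { toFun := fun p => ⟨p.1.2, ?_⟩
      invFun := fun f => ⟨⟨1, f.1⟩, ?_⟩
      left_inv := ?_
      right_inv := fun f => rfl }
  · obtain ⟨h1, h2⟩ := Finset.mem_filter.1 p.2
    push Not at h2
    have h3 := (hT _ _).1 (Finset.mem_sigma.1 h1).2
    rw [hone _ p.2] at h3
    exact ⟨⟨h3.1, h2⟩, h3.2⟩
  · refine Finset.mem_filter.2 ⟨Finset.mem_sigma.2 ⟨Finset.mem_univ _,
      (hT _ _).2 ⟨f.2.1.1, f.2.2⟩⟩, ?_⟩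
    push Not
    exact f.2.1.2
  · rintro ⟨⟨σ, f⟩, hp⟩
    have := hone _ hp
    simp only at this
    subst this
    rfl

/-- The coefficients of the Jacobi–Trudi determinant count violation-free families of paths. -/
lemma coeff_det {a b : Fin r → ℤ} (ha : StrictAnti a) (hb : StrictAnti b) {L U : ℤ}
    (hL : ∀ i, L ≤ a i) (hU : ∀ i, b i ≤ U) {c : ℤ → ℕ} (hc : ∀ k, 0 < c k) (d : ℕ →₀ ℕ) :
    MvPowerSeries.coeff d (Matrix.det (Matrix.of fun i j : Fin r => EqsymSeq c (a j) (b i - a j))) =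
      (Nat.card {f // (IsFam a b 1 f ∧ ∀ x i k, ¬ Crosses a f x i k) ∧
        famWt c L U f = d} : ℤ) := by
  let e : ∀ σ : Equiv.Perm (Fin r), {f : ∀ j, {f // IsPath (a j) (b (σ j)) f} //
      ∑ j, pathWt c L U (f j).1 = d} ≃ {f // IsFam a b σ f ∧ famWt c L U f = d} := fun σ =>
    { toFun := fun f => ⟨fun j => (f.1 j).1, fun j => (f.1 j).2, f.2⟩
      invFun := fun f => ⟨fun j => ⟨f.1 j, f.2.1 j⟩, f.2.2⟩
      left_inv := fun f => rfl
      right_inv := fun f => rfl }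
  have hfin : ∀ σ, Finite {f // IsFam a b σ f ∧ famWt c L U f = d} := by
    intro σ
    have := finite_pi_fiber (fun j (f : {f // IsPath (a j) (b (σ j)) f}) => pathWt c L U f.1)
      (fun j d => finite_path (hL _) (hU _) hc d) d
    exact Finite.of_equiv _ (e σ)
  rw [← sum_families ha hb hL c d hfin, Matrix.det_apply, map_sum]
  refine Finset.sum_congr rfl fun σ _ => ?_
  simp only [Matrix.of_apply, EqsymSeq_eq_gf (hL _) (hU _)]
  rw [gf_prod _ fun i d => finite_path (hL _) (hU _) hc d, Units.smul_def, map_zsmul, coeff_gf,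
    Nat.card_congr (e σ), smul_eq_mul]

end SMZ

/-! ### Tableaux as families of paths -/

namespace SMZ

lemma IsSkewSSYT.row_mono {lam mu : ℕ → ℕ} {m : ℕ × ℕ → ℕ} (h : IsSkewSSYT lam mu m) {i s t : ℕ}
    (hs : mu i ≤ s) (hst : s ≤ t) (ht : t < lam i) : m (i, s) ≤ m (i, t) := by
  induction t, hst using Nat.le_induction with
  | base => exact le_rfl
  | succ t hst ih =>
    exact (ih (by omega)).trans (h.row_le i t ⟨by simp only; omega, by simp only; omega⟩
      ⟨by simp only; omega, by simp only; omega⟩)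

lemma IsPath.pathWt_eq_row {n l i : ℕ} {L U : ℤ} {f : ℤ → ℕ∞}
    (h : IsPath ((n : ℤ) - i) ((l : ℤ) - i) f) (hL : L ≤ (n : ℤ) - i) (hU : (l : ℤ) - i ≤ U)
    (c : ℤ → ℕ) : pathWt c L U f =
      ∑ t ∈ Finset.Ico n l, Finsupp.single (f ((t : ℤ) - i)).toNat (c ((t : ℤ) - i)) := by
  rw [h.pathWt_eq hL hU]
  symm
  refine Finset.sum_bij (fun (t : ℕ) _ => (t : ℤ) - i) ?_ ?_ ?_ ?_
  · intro t ht
    rw [Finset.mem_Ico] at *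
    omega
  · intro s _ t _ h
    omega
  · intro y hy
    rw [Finset.mem_Ico] at hy
    exact ⟨(y + i).toNat, by rw [Finset.mem_Ico]; omega, by omega⟩
  · intros
    rfl

/-- The rows of a filling as paths: the box `(i, t)` is visited at its content `t - i`. -/
def tabPaths {r : ℕ} (lam mu : ℕ → ℕ) (m : ℕ × ℕ → ℕ) (i : Fin r) : ℤ → ℕ∞ :=
  mkPath ((mu i : ℤ) - (i : ℕ)) ((lam i : ℤ) - (i : ℕ)) fun y => m (i, (y + (i : ℕ)).toNat)

lemma tabPaths_apply {r : ℕ} (lam mu : ℕ → ℕ) (m : ℕ × ℕ → ℕ) (i : Fin r) {t : ℕ}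
    (h1 : mu i ≤ t) (h2 : t < lam i) :
    tabPaths lam mu m i ((t : ℤ) - (i : ℕ)) = (m (i, t) : ℕ∞) := by
  unfold tabPaths mkPath
  rw [if_neg (by omega), if_pos (by omega)]
  simp

lemma IsSkewSSYT.isFam {r : ℕ} {lam mu : ℕ → ℕ} (hle : ∀ i, mu i ≤ lam i) {m : ℕ × ℕ → ℕ}
    (h : IsSkewSSYT lam mu m) : IsFam (r := r) (fun j => (mu j : ℤ) - (j : ℕ))
      (fun j => (lam j : ℤ) - (j : ℕ)) 1 (tabPaths lam mu m) := by
  intro i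
  have := hle i
  refine isPath_mkPath (by simpa using this) (fun y h1 h2 => ?_) (fun y z h1 h2 h3 => ?_)
  · simp only [Equiv.Perm.one_apply] at *
    exact h.pos _ ⟨by simp only; omega, by simp only; omega⟩
  · simp only [Equiv.Perm.one_apply] at *
    exact h.row_mono (by omega) (by omega) (by omega)

lemma IsSkewSSYT.not_crosses {r : ℕ} {lam mu : ℕ → ℕ} (hmu : Antitone mu) (hlam : Antitone lam)
    {m : ℕ × ℕ → ℕ} (h : IsSkewSSYT lam mu m) (x : ℤ) (i k : Fin r) :
    ¬ Crosses (fun j => (mu j : ℤ) - (j : ℕ)) (tabPaths lam mu m) x i k := by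
  rintro ⟨hik, hx, htop, hle⟩
  have h1 : mu k ≤ mu i := hmu (by omega)
  have h2 : lam k ≤ lam i := hlam (by omega)
  obtain ⟨t, rfl⟩ : ∃ t : ℕ, x = (t : ℤ) - (i : ℕ) := ⟨(x + (i : ℕ)).toNat, by omega⟩
  have h3 : t < lam k := by
    by_contra hcon
    apply htop
    unfold tabPaths mkPath
    rw [if_neg (by omega), if_neg (by omega)]
  have h4 : (t : ℤ) - (i : ℕ) - 1 = (t : ℤ) - (k : ℕ) := by omega
  rw [h4, tabPaths_apply _ _ _ _ (by omega) h3, tabPaths_apply _ _ _ _ (by omega) (by omega),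
    Nat.cast_le, hik] at hle
  have h5 := h.col_lt i t ⟨by simp only; omega, by simp only; omega⟩
    ⟨by simp only [← hik]; omega, by simp only [← hik]; omega⟩
  omega

open Classical in
/-- The filling of the skew diagram whose rows are the given paths. -/
def pathsTab {r : ℕ} (lam mu : ℕ → ℕ) (f : Fin r → ℤ → ℕ∞) (p : ℕ × ℕ) : ℕ :=
  if h : p.1 < r ∧ InSkew lam mu p then (f ⟨p.1, h.1⟩ ((p.2 : ℤ) - (p.1 : ℤ))).toNat else 0

lemma pathsTab_isSkewSSYT {r : ℕ} {lam mu : ℕ → ℕ} (hlm : IsSkewPairWith r lam mu)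
    {f : Fin r → ℤ → ℕ∞} (hf : IsFam (fun j => (mu j : ℤ) - (j : ℕ))
      (fun j => (lam j : ℤ) - (j : ℕ)) 1 f)
    (hc : ∀ x i k, ¬ Crosses (fun j => (mu j : ℤ) - (j : ℕ)) f x i k) :
    IsSkewSSYT lam mu (pathsTab lam mu f) := by
  obtain ⟨hlam, hmu, hle, hr⟩ := hlm
  have hrow : ∀ p, InSkew lam mu p → p.1 < r := by
    intro p hp
    by_contra hcon
    have h1 := hr p.1 (by omega)
    have h2 := hp.2
    omega
  refine ⟨fun p hp => dif_neg fun h => hp h.2, fun p hp => ?_, fun i j h1 h2 => ?_,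
    fun i j h1 h2 => ?_⟩
  · rw [pathsTab, dif_pos ⟨hrow p hp, hp⟩]
    have h1 := hp.1
    have h2 := hp.2
    refine (hf _).toNat_pos ?_ ?_ <;> simp <;> omega
  · rw [pathsTab, pathsTab, dif_pos ⟨hrow _ h1, h1⟩, dif_pos ⟨hrow _ h2, h2⟩]
    have h3 := h1.2
    have h4 := h2.2
    rw [← ENat.natCast_le_natCast, (hf _).coe_toNat (by simp; omega),
      (hf _).coe_toNat (by simp at h4 ⊢; omega)]
    exact (hf _).mono (by simp)
  · rw [pathsTab, pathsTab, dif_pos ⟨hrow _ h1, h1⟩, dif_pos ⟨hrow _ h2, h2⟩]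
    have h0 := h1.1
    have h3 := h1.2
    have h4 := h2.2
    simp only at h0 h3 h4
    rw [← ENat.natCast_lt_natCast, (hf _).coe_toNat (by simp; omega),
      (hf _).coe_toNat (by simp; omega)]
    by_contra hcon
    have hx : (j : ℤ) - ((i + 1 : ℕ) : ℤ) = (j : ℤ) - i - 1 := by push_cast; ring
    refine hc ((j : ℤ) - i) ⟨i, hrow _ h1⟩ ⟨i + 1, hrow _ h2⟩ ⟨rfl, ?_, ?_, ?_⟩
    · simp only; omega
    · rw [Ne, (hf _).top_iff]
      simp; omega
    · rw [← hx]
      exact not_lt.1 hcon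

lemma famWt_eq {r : ℕ} {lam mu : ℕ → ℕ} {L U : ℤ} {f : Fin r → ℤ → ℕ∞}
    (hf : IsFam (fun j => (mu j : ℤ) - (j : ℕ)) (fun j => (lam j : ℤ) - (j : ℕ)) 1 f)
    (hL : ∀ i : Fin r, L ≤ (mu i : ℤ) - (i : ℕ)) (hU : ∀ i : Fin r, (lam i : ℤ) - (i : ℕ) ≤ U)
    {γ : ℕ × ℕ → ℕ} {c : ℤ → ℕ}
    (hdiag : ∀ p : ℕ × ℕ, InSkew lam mu p → γ p = c ((p.2 : ℤ) - (p.1 : ℤ)))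
    {m : ℕ × ℕ → ℕ}
    (hm : ∀ (i : Fin r) (t : ℕ), mu i ≤ t → t < lam i →
      m (i, t) = (f i ((t : ℤ) - (i : ℕ))).toNat) :
    famWt c L U f = ∑ i ∈ Finset.range r, ∑ j ∈ Finset.Ico (mu i) (lam i),
      Finsupp.single (m (i, j)) (γ (i, j)) := by
  rw [Finset.sum_range, famWt]
  refine Finset.sum_congr rfl fun i _ => ?_
  rw [(hf i).pathWt_eq_row (hL i) (hU i)]
  refine Finset.sum_congr rfl fun t ht => ?_
  rw [Finset.mem_Ico] at ht
  rw [hm i t ht.1 ht.2, hdiag (i, t) ht]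

/-- Semi-standard tableaux of shape `λ/μ` are the violation-free families of paths from
`μ_i - i` to `λ_i - i`: row monotonicity is monotonicity of the paths, column strictness is the
absence of violations. -/
def tabEquiv {r : ℕ} {lam mu : ℕ → ℕ} (hlm : IsSkewPairWith r lam mu) {L U : ℤ}
    (hL : ∀ i : Fin r, L ≤ (mu i : ℤ) - (i : ℕ)) (hU : ∀ i : Fin r, (lam i : ℤ) - (i : ℕ) ≤ U)
    {γ : ℕ × ℕ → ℕ} {c : ℤ → ℕ}
    (hdiag : ∀ p : ℕ × ℕ, InSkew lam mu p → γ p = c ((p.2 : ℤ) - (p.1 : ℤ))) (d : ℕ →₀ ℕ) :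
    {m : ℕ × ℕ → ℕ // IsSkewSSYT lam mu m ∧
      (∑ i ∈ Finset.range r, ∑ j ∈ Finset.Ico (mu i) (lam i),
        Finsupp.single (m (i, j)) (γ (i, j))) = d} ≃
    {f : Fin r → ℤ → ℕ∞ // (IsFam (fun j => (mu j : ℤ) - (j : ℕ))
        (fun j => (lam j : ℤ) - (j : ℕ)) 1 f ∧
      ∀ x i k, ¬ Crosses (fun j => (mu j : ℤ) - (j : ℕ)) f x i k) ∧ famWt c L U f = d} where
  toFun m := ⟨tabPaths lam mu m.1, ⟨m.2.1.isFam hlm.2.2.1, m.2.1.not_crosses hlm.2.1 hlm.1⟩,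
    (famWt_eq (m.2.1.isFam hlm.2.2.1) hL hU hdiag fun i t h1 h2 => by
      rw [tabPaths_apply _ _ _ _ h1 h2, ENat.toNat_natCast]).trans m.2.2⟩
  invFun f := ⟨pathsTab lam mu f.1, pathsTab_isSkewSSYT hlm f.2.1.1 f.2.1.2,
    (famWt_eq f.2.1.1 hL hU hdiag fun i t h1 h2 => by
      rw [pathsTab, dif_pos ⟨i.2, h1, h2⟩]).symm.trans f.2.2⟩
  left_inv m := by
    ext p
    simp only [pathsTab]
    split_ifs with h
    · have := tabPaths_apply lam mu m.1 ⟨p.1, h.1⟩ h.2.1 h.2.2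
      simp only at this
      rw [this, ENat.toNat_natCast]
    · refine (m.2.1.zero_off p fun hp => h ⟨?_, hp⟩).symm
      by_contra hcon
      have h1 := hlm.2.2.2 p.1 (by omega)
      have h2 := hp.2
      omega
  right_inv f := by
    ext1
    funext i
    refine (f.2.1.1 i).mkPath_eq fun y h1 h2 => ?_
    simp only [Equiv.Perm.one_apply] at h1 h2
    simp only [pathsTab]
    rw [dif_pos ⟨i.2, by simp only; omega, by simp only; omega⟩]
    have hy : (((y + (i : ℕ)).toNat : ℕ) : ℤ) - (i : ℕ) = y := by omega
    simp only [hy]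

lemma strictAnti_sub {r : ℕ} {ν : ℕ → ℕ} (h : Antitone ν) :
    StrictAnti fun j : Fin r => (ν j : ℤ) - (j : ℕ) := by
  intro i j hij
  have h1 : ν j ≤ ν i := h (Fin.lt_def.1 hij).le
  have h2 := Fin.lt_def.1 hij
  simp only
  omega

lemma schurQS_eq_det_of_pos {r : ℕ} {lam mu : ℕ → ℕ} (hlm : IsSkewPairWith r lam mu)
    {γ : ℕ × ℕ → ℕ} {c : ℤ → ℕ} (hc : ∀ k, 0 < c k)
    (hdiag : ∀ p : ℕ × ℕ, InSkew lam mu p → γ p = c ((p.2 : ℤ) - (p.1 : ℤ))) :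
    schurQS r lam mu γ = Matrix.det (Matrix.of fun i j : Fin r =>
      EqsymSeq c ((mu j : ℤ) - (j : ℕ)) (((lam i : ℤ) - (i : ℕ)) - ((mu j : ℤ) - (j : ℕ)))) := by
  have hL : ∀ i : Fin r, -(r : ℤ) ≤ (mu i : ℤ) - (i : ℕ) := fun i => by omega
  have hU : ∀ i : Fin r, (lam i : ℤ) - (i : ℕ) ≤ lam 0 := fun i => by
    have : lam i ≤ lam 0 := hlm.1 (Nat.zero_le _)
    omega
  ext d
  rw [coeff_det (strictAnti_sub hlm.2.1) (strictAnti_sub hlm.1) hL hU hc d,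
    ← Nat.card_congr (tabEquiv hlm hL hU hdiag d)]
  rfl

/-! ### Diagonals without boxes -/

/-- Every diagonal met by an entry of a nonvanishing term of the determinant contains a box. If
diagonal `k` had none, then for some `n` the starts `> k` would be those of index `< n` while only
ends of index `< n` could be `> k`; so `σ` would permute the indices `< n`, and no path would step
across `k`. -/
lemma exists_box {r : ℕ} {lam mu : ℕ → ℕ} (hlm : IsSkewPairWith r lam mu)
    {σ : Equiv.Perm (Fin r)}
    (hσ : ∀ j : Fin r, (mu j : ℤ) - (j : ℕ) ≤ (lam (σ j) : ℤ) - (σ j : ℕ))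
    {j : Fin r} {k : ℤ} (h1 : (mu j : ℤ) - (j : ℕ) ≤ k) (h2 : k < (lam (σ j) : ℤ) - (σ j : ℕ)) :
    ∃ p : ℕ × ℕ, InSkew lam mu p ∧ (p.2 : ℤ) - (p.1 : ℤ) = k := by
  classical
  have hex : ∃ n : ℕ, (mu n : ℤ) - n ≤ k := ⟨j, h1⟩
  obtain ⟨n, hn, hmin⟩ : ∃ n : ℕ, (mu n : ℤ) - n ≤ k ∧ ∀ i < n, k < (mu i : ℤ) - i :=
    ⟨Nat.find hex, Nat.find_spec hex, fun i hi => not_le.1 (Nat.find_min hex hi)⟩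
  by_cases hlt : k < (lam n : ℤ) - n
  · exact ⟨(n, (k + n).toNat), ⟨by simp only; omega, by simp only; omega⟩, by simp only; omega⟩
  · exfalso
    have hge : ∀ i, n ≤ i → (lam i : ℤ) - i ≤ k := fun i hi => by
      have := hlm.1 hi
      omega
    let S : Finset (Fin r) := Finset.univ.filter fun i => (i : ℕ) < n
    have hS : ∀ i, i ∈ S ↔ (i : ℕ) < n := by simp [S]
    have hmaps : ∀ i ∈ S, σ i ∈ S := by
      intro i hi
      rw [hS] at *
      by_contra hcon
      have := hge (σ i) (by omega)
      have := hmin i hi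
      have := hσ i
      omega
    have himg : S.image σ = S := Finset.eq_of_subset_of_card_le
      (Finset.image_subset_iff.2 hmaps) (Finset.card_image_of_injective _ σ.injective).ge
    have hj : σ j ∈ S := by
      rw [hS]
      by_contra hcon
      have := hge (σ j) (by omega)
      omega
    rw [← himg, Finset.mem_image] at hj
    obtain ⟨i, hi, hij⟩ := hj
    obtain rfl := σ.injective hij
    have := hmin i ((hS i).1 hi)
    omega

/-- The determinant depends only on the values of `c` on diagonals that contain a box. -/
lemma det_congr {r : ℕ} {lam mu : ℕ → ℕ} (hlm : IsSkewPairWith r lam mu) {c c' : ℤ → ℕ}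
    (hcc : ∀ p : ℕ × ℕ, InSkew lam mu p → c ((p.2 : ℤ) - p.1) = c' ((p.2 : ℤ) - p.1)) :
    Matrix.det (Matrix.of fun i j : Fin r =>
      EqsymSeq c ((mu j : ℤ) - (j : ℕ)) (((lam i : ℤ) - (i : ℕ)) - ((mu j : ℤ) - (j : ℕ)))) =
    Matrix.det (Matrix.of fun i j : Fin r =>
      EqsymSeq c' ((mu j : ℤ) - (j : ℕ))
        (((lam i : ℤ) - (i : ℕ)) - ((mu j : ℤ) - (j : ℕ)))) := by
  rw [Matrix.det_apply, Matrix.det_apply]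
  refine Finset.sum_congr rfl fun σ _ => ?_
  congr 1
  simp only [Matrix.of_apply]
  by_cases hσ : ∀ j : Fin r, (mu j : ℤ) - (j : ℕ) ≤ (lam (σ j) : ℤ) - (σ j : ℕ)
  · refine Finset.prod_congr rfl fun j _ => ?_
    unfold EqsymSeq
    split_ifs with h
    · rfl
    · congr 1
      funext i
      obtain ⟨p, hp, hpk⟩ := exists_box hlm hσ (j := j) (k := (mu j : ℤ) - (j : ℕ) + (i : ℕ))
        (by omega) (by have := i.2; omega)
      rw [← hpk]
      exact hcc p hp
  · push Not at hσ
    obtain ⟨j, hj⟩ := hσ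
    rw [Finset.prod_eq_zero (Finset.mem_univ j), Finset.prod_eq_zero (Finset.mem_univ j)] <;>
      exact if_pos (by omega)

end SMZ

/-- Jacobi–Trudi formula of `H`-type for Schur type quasi-symmetric functions, as an
identity of formal power series. -/
theorem schurQS_jacobiTrudi_E_entries
    (r : ℕ) (lam mu : ℕ → ℕ) (hlm : SMZ.IsSkewPairWith r lam mu)
    (γ : ℕ × ℕ → ℕ) (c : ℤ → ℕ)
    (hpos : ∀ p, SMZ.InSkew lam mu p → 0 < γ p)
    (hdiag : ∀ p : ℕ × ℕ, SMZ.InSkew lam mu p → γ p = c ((p.2 : ℤ) - (p.1 : ℤ))) :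
    SMZ.schurQS r lam mu γ =
      Matrix.det (Matrix.of fun i j : Fin r =>
        SMZ.EqsymSeq c ((mu (j : ℕ) : ℤ) - ((j : ℕ) : ℤ))
          ((lam (i : ℕ) : ℤ) - (mu (j : ℕ) : ℤ) - ((i : ℕ) : ℤ) + ((j : ℕ) : ℤ))) := by
  classical
  -- `c` may vanish on diagonals without boxes, where it is replaced by `1`.
  let c' : ℤ → ℕ := fun k =>
    if ∃ p : ℕ × ℕ, SMZ.InSkew lam mu p ∧ (p.2 : ℤ) - (p.1 : ℤ) = k then c k else 1
  have hcc : ∀ p : ℕ × ℕ, SMZ.InSkew lam mu p →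
      c ((p.2 : ℤ) - (p.1 : ℤ)) = c' ((p.2 : ℤ) - (p.1 : ℤ)) := fun p hp =>
    (if_pos ⟨p, hp, rfl⟩).symm
  have hc' : ∀ k, 0 < c' k := by
    intro k
    simp only [c']
    split_ifs with h
    · obtain ⟨p, hp, rfl⟩ := h
      rw [← hdiag p hp]
      exact hpos p hp
    · exact one_pos
  rw [SMZ.schurQS_eq_det_of_pos hlm hc' fun p hp => (hdiag p hp).trans (hcc p hp),
    ← SMZ.det_congr hlm hcc]
  congr 2
  funext i j
  congr 1
  ring
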